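/- Let f : ℝ² → ℝ be a homogeneous polynomial. For (x,y) ∈ ℝ² set W = √(1 + f_x² + f_y²), d = 1 − √((W−1)/(W+1)) > 0, and Δ² = [((1+f_y²)·f_xx − 2·f_x·f_y·f_xy + (1+f_x²)·f_yy)² − 4·(1+f_x²+f_y²)·(f_xx·f_yy − f_xy²)] / (1+f_x²+f_y²)³, which equals the square (κ₁ − κ₂)² of the difference of the principal curvatures of the graph z = f(x,y) at (x,y). Then the infimum over all (x,y) ∈ ℝ² of Δ²/d² is equal to 0. -/

import Mathlib

open MvPolynomial Real Filter

/-- Evaluate a bivariate polynomial at `(x, y)`. -/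
noncomputable def ev (p : MvPolynomial (Fin 2) ℝ) (x y : ℝ) : ℝ :=
  eval ![x, y] p

/-- Formal partial derivative in the first variable. -/
noncomputable def Dx (p : MvPolynomial (Fin 2) ℝ) : MvPolynomial (Fin 2) ℝ :=
  pderiv (0 : Fin 2) p

/-- Formal partial derivative in the second variable. -/
noncomputable def Dy (p : MvPolynomial (Fin 2) ℝ) : MvPolynomial (Fin 2) ℝ :=
  pderiv (1 : Fin 2) p

/-- The square `(κ₁ − κ₂)²` of the difference of the principal curvatures of the
graph `z = f(x,y)` at `(x,y)`, for `f` the polynomial function determined by `p`. -/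
noncomputable def Delta2 (p : MvPolynomial (Fin 2) ℝ) (x y : ℝ) : ℝ :=
  (((1 + ev (Dy p) x y ^ 2) * ev (Dx (Dx p)) x y
      - 2 * ev (Dx p) x y * ev (Dy p) x y * ev (Dy (Dx p)) x y
      + (1 + ev (Dx p) x y ^ 2) * ev (Dy (Dy p)) x y) ^ 2
    - 4 * (1 + ev (Dx p) x y ^ 2 + ev (Dy p) x y ^ 2)
        * (ev (Dx (Dx p)) x y * ev (Dy (Dy p)) x y - ev (Dy (Dx p)) x y ^ 2))
  / (1 + ev (Dx p) x y ^ 2 + ev (Dy p) x y ^ 2) ^ 3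

/-- `W = √(1 + f_x² + f_y²)`. -/
noncomputable def Wgr (p : MvPolynomial (Fin 2) ℝ) (x y : ℝ) : ℝ :=
  Real.sqrt (1 + ev (Dx p) x y ^ 2 + ev (Dy p) x y ^ 2)

/-- The distance to infinity `d = 1 − √((W−1)/(W+1)) = 1 − |ξ|` of the point `(x,y)`
under the Gauss map of the graph `z = f(x,y)`. -/
noncomputable def dInf (p : MvPolynomial (Fin 2) ℝ) (x y : ℝ) : ℝ :=
  1 - Real.sqrt ((Wgr p x y - 1) / (Wgr p x y + 1))

/-- Partial derivatives of polynomials commute. -/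
theorem pderiv_pderiv_comm {σ R : Type*} [CommRing R] (i j : σ) (p : MvPolynomial σ R) :
    pderiv i (pderiv j p) = pderiv j (pderiv i p) := by
  classical
  have h : ⁅pderiv (R := R) i, pderiv (R := R) j⁆ = 0 := by
    refine derivation_ext fun k => ?_
    simp only [Derivation.commutator_apply, pderiv_X, Pi.single_apply, Derivation.zero_apply]
    split_ifs <;> simp
  rw [← sub_eq_zero, ← Derivation.commutator_apply, h, Derivation.zero_apply]

/-- Euler's identity for a bivariate homogeneous polynomial, evaluated at a point. -/
theorem ev_euler {p : MvPolynomial (Fin 2) ℝ} {m : ℕ} (hp : p.IsHomogeneous m) (x y : ℝ) :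
    x * ev (Dx p) x y + y * ev (Dy p) x y = m * ev p x y := by
  have h := congrArg (eval ![x, y]) hp.sum_X_mul_pderiv
  simpa [Fin.sum_univ_two, ev, Dx, Dy] using h

theorem ev_zero_of_isHomogeneous {p : MvPolynomial (Fin 2) ℝ} {m : ℕ} (hm : m ≠ 0)
    (hp : p.IsHomogeneous m) : ev p 0 0 = 0 := by
  have h := ev_euler hp 0 0
  simpa [hm] using h.symm

theorem eq_C_of_isHomogeneous_zero {p : MvPolynomial (Fin 2) ℝ} (hp : p.IsHomogeneous 0) :
    ∃ c, p = C c :=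
  ⟨_, totalDegree_eq_zero_iff_eq_C.1 ((totalDegree_zero_iff_isHomogeneous _).2 hp)⟩

/-- The numerator of `(κ₁ - κ₂)²` for a graph with gradient `(P, Q)` and Hessian entries
`A`, `B`, `C`. -/
def curvatureNum (A B C P Q : ℝ) : ℝ :=
  ((1 + Q ^ 2) * A - 2 * P * Q * B + (1 + P ^ 2) * C) ^ 2
    - 4 * (1 + P ^ 2 + Q ^ 2) * (A * C - B ^ 2)

theorem curvatureNum_nonneg (A B C P Q : ℝ) : 0 ≤ curvatureNum A B C P Q := by
  have hE : 0 < 1 + P ^ 2 := by positivity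
  have key : (1 + P ^ 2) ^ 2 * curvatureNum A B C P Q =
      4 * (1 + P ^ 2 + Q ^ 2) * ((1 + P ^ 2) * B - P * Q * A) ^ 2
      + ((1 + P ^ 2) * ((1 + P ^ 2) * C - (1 + Q ^ 2) * A)
        - 2 * (P * Q) * ((1 + P ^ 2) * B - P * Q * A)) ^ 2 := by
    unfold curvatureNum; ring
  refine (mul_nonneg_iff_of_pos_left (show 0 < (1 + P ^ 2) ^ 2 by positivity)).1 ?_
  rw [key]; positivity

theorem Delta2_eq (p : MvPolynomial (Fin 2) ℝ) (x y : ℝ) :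
    Delta2 p x y = curvatureNum (ev (Dx (Dx p)) x y) (ev (Dy (Dx p)) x y) (ev (Dy (Dy p)) x y)
      (ev (Dx p) x y) (ev (Dy p) x y) / (1 + ev (Dx p) x y ^ 2 + ev (Dy p) x y ^ 2) ^ 3 :=
  rfl

theorem Delta2_nonneg (p : MvPolynomial (Fin 2) ℝ) (x y : ℝ) : 0 ≤ Delta2 p x y := by
  rw [Delta2_eq]
  exact div_nonneg (curvatureNum_nonneg ..) (by positivity)

/-- The distance to infinity is at least `1 / (2 W)`. -/
theorem inv_two_mul_Wgr_le_dInf (p : MvPolynomial (Fin 2) ℝ) (x y : ℝ) :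
    1 / (2 * Wgr p x y) ≤ dInf p x y := by
  have hW : 1 ≤ Wgr p x y := by
    unfold Wgr
    rw [Real.one_le_sqrt]
    nlinarith [sq_nonneg (ev (Dx p) x y), sq_nonneg (ev (Dy p) x y)]
  unfold dInf
  generalize Wgr p x y = W at hW
  have hW1 : 0 < W + 1 := by linarith
  have hz : 0 ≤ (W - 1) / (W + 1) := div_nonneg (by linarith) hW1.le
  have hs : √((W - 1) / (W + 1)) ≤ (1 + (W - 1) / (W + 1)) / 2 := by
    nlinarith [Real.sq_sqrt hz, sq_nonneg (√((W - 1) / (W + 1)) - 1)]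
  have he : 1 - (1 + (W - 1) / (W + 1)) / 2 = 1 / (W + 1) := by field_simp; ring
  have hle : 1 / (2 * W) ≤ 1 / (W + 1) := one_div_le_one_div_of_le hW1 (by linarith)
  linarith

theorem Delta2_div_dInf_sq_le (p : MvPolynomial (Fin 2) ℝ) (x y : ℝ) :
    Delta2 p x y / dInf p x y ^ 2 ≤
      4 * curvatureNum (ev (Dx (Dx p)) x y) (ev (Dy (Dx p)) x y) (ev (Dy (Dy p)) x y)
        (ev (Dx p) x y) (ev (Dy p) x y) / (1 + ev (Dx p) x y ^ 2 + ev (Dy p) x y ^ 2) ^ 2 := by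
  have hS : 0 < 1 + ev (Dx p) x y ^ 2 + ev (Dy p) x y ^ 2 := by positivity
  have hW : 0 < Wgr p x y := Real.sqrt_pos.2 hS
  have hWsq : Wgr p x y ^ 2 = 1 + ev (Dx p) x y ^ 2 + ev (Dy p) x y ^ 2 := Real.sq_sqrt hS.le
  have hd := pow_le_pow_left₀ (by positivity) (inv_two_mul_Wgr_le_dInf p x y) 2
  calc Delta2 p x y / dInf p x y ^ 2
      ≤ Delta2 p x y / (1 / (2 * Wgr p x y)) ^ 2 :=
        div_le_div_of_nonneg_left (Delta2_nonneg p x y) (by positivity) hd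
    _ = Delta2 p x y * (4 * Wgr p x y ^ 2) := by field_simp; ring
    _ = _ := by rw [hWsq, Delta2_eq]; field_simp

/-- Diagonalization of a real symmetric `2 × 2` matrix by a rotation, with the eigenvalue of
larger absolute value first. -/
theorem exists_rotation_diagonalizing (A B C : ℝ) : ∃ l m c s : ℝ, c ^ 2 + s ^ 2 = 1 ∧ |m| ≤ |l| ∧
    A = l * c ^ 2 + m * s ^ 2 ∧ B = (l - m) * (c * s) ∧ C = l * s ^ 2 + m * c ^ 2 := by
  obtain ⟨l, m, c, s, h1, hA, hB, hC⟩ : ∃ l m c s : ℝ, c ^ 2 + s ^ 2 = 1 ∧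
      A = l * c ^ 2 + m * s ^ 2 ∧ B = (l - m) * (c * s) ∧ C = l * s ^ 2 + m * c ^ 2 := by
    set z : ℂ := ⟨A - C, 2 * B⟩
    set θ := z.arg / 2 with hθ
    have harg : z.arg = 2 * θ := by rw [hθ]; ring
    have hre : ‖z‖ * Real.cos (2 * θ) = A - C := harg ▸ Complex.norm_mul_cos_arg z
    have him : ‖z‖ * Real.sin (2 * θ) = 2 * B := harg ▸ Complex.norm_mul_sin_arg z
    have h1 := Real.cos_sq_add_sin_sq θ
    rw [Real.cos_two_mul'] at hre
    rw [Real.sin_two_mul] at him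
    refine ⟨(A + C + ‖z‖) / 2, (A + C - ‖z‖) / 2, Real.cos θ, Real.sin θ, h1, ?_, ?_, ?_⟩
    · linear_combination -hre / 2 - (A + C) / 2 * h1
    · linear_combination -him / 2
    · linear_combination hre / 2 - (A + C) / 2 * h1
  rcases le_total |m| |l| with h | h
  · exact ⟨l, m, c, s, h1, h, hA, hB, hC⟩
  · exact ⟨m, l, -s, c, by linarith, h, by linarith, by linarith, by linarith⟩

/-- The numerator of `(κ₁ - κ₂)²` for the graph of a quadratic form is not bounded below by a
positive multiple of `W⁴`. -/
theorem exists_curvatureNum_le (A B C : ℝ) {ε : ℝ} (hε : 0 < ε) : ∃ x y : ℝ,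
    curvatureNum A B C (A * x + B * y) (B * x + C * y) ≤
      ε * (1 + (A * x + B * y) ^ 2 + (B * x + C * y) ^ 2) ^ 2 := by
  obtain ⟨l, m, c, s, h1, hml, rfl, rfl, rfl⟩ := exists_rotation_diagonalizing A B C
  suffices h : ∃ a b : ℝ, (l * (1 + m ^ 2 * b ^ 2) + m * (1 + l ^ 2 * a ^ 2)) ^ 2
      - 4 * (1 + l ^ 2 * a ^ 2 + m ^ 2 * b ^ 2) * (l * m) ≤
      ε * (1 + l ^ 2 * a ^ 2 + m ^ 2 * b ^ 2) ^ 2 by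
    obtain ⟨a, b, hab⟩ := h
    refine ⟨a * c - b * s, a * s + b * c, ?_⟩
    have hP : (l * c ^ 2 + m * s ^ 2) * (a * c - b * s) + (l - m) * (c * s) * (a * s + b * c)
        = l * a * c - m * b * s := by
      linear_combination (l * a * c - m * b * s) * h1
    have hQ : (l - m) * (c * s) * (a * c - b * s) + (l * s ^ 2 + m * c ^ 2) * (a * s + b * c)
        = l * a * s + m * b * c := by
      linear_combination (l * a * s + m * b * c) * h1
    rw [hP, hQ]
    have hS : 1 + (l * a * c - m * b * s) ^ 2 + (l * a * s + m * b * c) ^ 2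
        = 1 + l ^ 2 * a ^ 2 + m ^ 2 * b ^ 2 := by
      linear_combination (l ^ 2 * a ^ 2 + m ^ 2 * b ^ 2) * h1
    have hT : (1 + (l * a * s + m * b * c) ^ 2) * (l * c ^ 2 + m * s ^ 2)
        - 2 * (l * a * c - m * b * s) * (l * a * s + m * b * c) * ((l - m) * (c * s))
        + (1 + (l * a * c - m * b * s) ^ 2) * (l * s ^ 2 + m * c ^ 2)
        = l * (1 + m ^ 2 * b ^ 2) + m * (1 + l ^ 2 * a ^ 2) := by
      linear_combination (l + m + (l * m ^ 2 * b ^ 2 + m * l ^ 2 * a ^ 2)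
        * (c ^ 2 + s ^ 2 + 1)) * h1
    have hD : (l * c ^ 2 + m * s ^ 2) * (l * s ^ 2 + m * c ^ 2) - ((l - m) * (c * s)) ^ 2
        = l * m := by
      linear_combination l * m * (c ^ 2 + s ^ 2 + 1) * h1
    rw [curvatureNum, hT, hS, hD]
    exact hab
  rcases lt_or_ge 0 (l * m) with hpos | hneg
  · have hl : l ≠ 0 := left_ne_zero_of_mul hpos.ne'
    have hm : m ≠ 0 := right_ne_zero_of_mul hpos.ne'
    have hu : 0 ≤ (l / m - 1) / l ^ 2 := by
      have hq : 1 ≤ l / m := by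
        have : l / m = |l| / |m| := by
          rw [← abs_div, abs_of_pos (div_pos_iff.2 (mul_pos_iff.1 hpos))]
        rw [this]
        exact (one_le_div (abs_pos.2 hm)).2 hml
      exact div_nonneg (by linarith) (sq_nonneg l)
    refine ⟨√((l / m - 1) / l ^ 2), 0, ?_⟩
    rw [Real.sq_sqrt hu]
    have hz : l ^ 2 * ((l / m - 1) / l ^ 2) = l / m - 1 := by field_simp
    rw [hz]
    have hN : (l * (1 + m ^ 2 * 0 ^ 2) + m * (1 + (l / m - 1))) ^ 2
        - 4 * (1 + (l / m - 1) + m ^ 2 * 0 ^ 2) * (l * m) = 0 := by field_simp; ring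
    rw [hN]
    positivity
  · rcases eq_or_ne l 0 with rfl | hl
    · have hm : m = 0 := by simpa using hml
      subst hm
      exact ⟨0, 0, by simp [hε.le]⟩
    set M := |l| + |m|
    have hM : 0 < M := add_pos_of_pos_of_nonneg (abs_pos.2 hl) (abs_nonneg m)
    set k := (l - m) ^ 2 / (ε * M) with hk
    have hk0 : 0 ≤ k := by positivity
    have hsq : ∀ r : ℝ, r ^ 2 * √(k / |r|) ^ 2 = |r| * k := fun r => by
      rw [Real.sq_sqrt (by positivity), ← sq_abs]
      rcases eq_or_ne r 0 with rfl | hr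
      · simp
      · have := abs_pos.2 hr
        field_simp
    refine ⟨√(k / |l|), √(k / |m|), ?_⟩
    rw [hsq, hsq]
    have hcancel : l * |m| + m * |l| = 0 := by
      rcases mul_nonpos_iff.1 hneg with ⟨h, h'⟩ | ⟨h, h'⟩
      · rw [abs_of_nonneg h, abs_of_nonpos h']; ring
      · rw [abs_of_nonpos h, abs_of_nonneg h']; ring
    have hT : l * (1 + |m| * k) + m * (1 + |l| * k) = l + m := by
      linear_combination k * hcancel
    have hS : 1 + |l| * k + |m| * k = 1 + M * k := by ring
    have hMk : ε * (M * k) = (l - m) ^ 2 := by rw [hk]; field_simp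
    rw [hT, hS]
    have hMk0 : 0 ≤ M * k := by positivity
    generalize M * k = v at *
    nlinarith [mul_nonneg hMk0 (sq_nonneg (l + m)), mul_nonneg hMk0 hε.le]

/-- For `n ≠ 2` the Hessian of a homogeneous polynomial of degree `n` vanishes at the origin. -/
theorem ev_pderiv_pderiv_zero {p : MvPolynomial (Fin 2) ℝ} {n : ℕ} (hp : p.IsHomogeneous n)
    (hn : n ≠ 2) (i j : Fin 2) : ev (pderiv i (pderiv j p)) 0 0 = 0 := by
  rcases lt_or_gt_of_ne hn with h | h
  · have h0 : (pderiv j p).IsHomogeneous 0 := by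
      have := hp.pderiv (i := j)
      rwa [show n - 1 = 0 by omega] at this
    obtain ⟨c, hc⟩ := eq_C_of_isHomogeneous_zero h0
    rw [hc, pderiv_C, ev, map_zero]
  · exact ev_zero_of_isHomogeneous (by omega) (hp.pderiv.pderiv (i := i))

/-- For a homogeneous polynomial, some point makes the numerator of `(κ₁ - κ₂)²` small against `W⁴`. -/
theorem exists_curvatureNum_le_of_isHomogeneous {p : MvPolynomial (Fin 2) ℝ} {n : ℕ}
    (hp : p.IsHomogeneous n) {ε : ℝ} (hε : 0 < ε) : ∃ x y : ℝ,
    curvatureNum (ev (Dx (Dx p)) x y) (ev (Dy (Dx p)) x y) (ev (Dy (Dy p)) x y)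
        (ev (Dx p) x y) (ev (Dy p) x y) ≤
      ε * (1 + ev (Dx p) x y ^ 2 + ev (Dy p) x y ^ 2) ^ 2 := by
  rcases eq_or_ne n 2 with rfl | hn
  · obtain ⟨A, hA⟩ := eq_C_of_isHomogeneous_zero (p := Dx (Dx p)) hp.pderiv.pderiv
    obtain ⟨B, hB⟩ := eq_C_of_isHomogeneous_zero (p := Dy (Dx p)) hp.pderiv.pderiv
    obtain ⟨D, hD⟩ := eq_C_of_isHomogeneous_zero (p := Dy (Dy p)) hp.pderiv.pderiv
    have hB' : Dx (Dy p) = C B := (pderiv_pderiv_comm 0 1 p).trans hB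
    have hC : ∀ a x y, ev (C a) x y = a := fun a x y => eval_C a
    obtain ⟨x, y, h⟩ := exists_curvatureNum_le A B D hε
    have hx : ev (Dx p) x y = A * x + B * y := by
      have := ev_euler (p := Dx p) (m := 1) hp.pderiv x y
      rw [hA, hB, hC, hC] at this
      push_cast at this
      linarith
    have hy : ev (Dy p) x y = B * x + D * y := by
      have := ev_euler (p := Dy p) (m := 1) hp.pderiv x y
      rw [hB', hD, hC, hC] at this
      push_cast at this
      linarith
    refine ⟨x, y, ?_⟩
    rwa [hA, hB, hD, hC, hC, hC, hx, hy]
  · refine ⟨0, 0, ?_⟩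
    have hA : ev (Dx (Dx p)) 0 0 = 0 := ev_pderiv_pderiv_zero hp hn 0 0
    have hB : ev (Dy (Dx p)) 0 0 = 0 := ev_pderiv_pderiv_zero hp hn 1 0
    have hD : ev (Dy (Dy p)) 0 0 = 0 := ev_pderiv_pderiv_zero hp hn 1 1
    rw [hA, hB, hD]
    have h0 : ∀ P Q, curvatureNum 0 0 0 P Q = 0 := fun P Q => by simp [curvatureNum]
    rw [h0]
    positivity

/-- For a homogeneous polynomial graph, the infimum over the plane of
`(κ₁ − κ₂)²/d²` is zero, where `d` is the distance to infinity. -/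
theorem inf_curvature_diff_over_dist_eq_zero (p : MvPolynomial (Fin 2) ℝ) (n : ℕ)
    (hp : p.IsHomogeneous n) :
    ⨅ q : ℝ × ℝ, Delta2 p q.1 q.2 / (dInf p q.1 q.2) ^ 2 = 0 := by
  have hnonneg : ∀ q : ℝ × ℝ, 0 ≤ Delta2 p q.1 q.2 / (dInf p q.1 q.2) ^ 2 := fun q =>
    div_nonneg (Delta2_nonneg p q.1 q.2) (sq_nonneg _)
  refine le_antisymm (le_of_forall_pos_le_add fun ε hε => ?_) (Real.iInf_nonneg hnonneg)
  obtain ⟨x, y, h⟩ := exists_curvatureNum_le_of_isHomogeneous hp (ε := ε / 4) (by positivity)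
  refine (ciInf_le ⟨0, Set.forall_mem_range.2 hnonneg⟩ (x, y)).trans
    ((Delta2_div_dInf_sq_le p x y).trans ?_)
  rw [zero_add, div_le_iff₀ (by positivity)]
  linarith
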